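/- arXiv:1003.5615 — 2 statements merged into one kernel-verified Lean document; each statement's English description precedes it below -/
import Mathlib

section
/- Let n ≥ 2 be an integer, σ > 0, and set s := iσ. Define on (−∞, −1) the two solutions w₊(z) := (−z)^{−s − n/2} · √(1−z) · ₂F₁(n/2 + s, 1 + s, 1 + 2s; 1/z) and w₋(z) := (−z)^{s − n/2} · √(1−z) · ₂F₁(n/2 − s, 1 − s, 1 − 2s; 1/z), where (−z)^{w} := exp(w·log(−z)) with the real logarithm. Then the reduced Wronskian z ↦ (z(z−1))^{n/2} · ( w₊'(z)·w₋(z) − w₊(z)·w₋'(z) ) is constant on (−∞, −1), and its value is 2iσ. -/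
open Real Set Complex

/-!
The substitution `x = 1 / z` turns the two solutions, up to a common factor, into the Kummer pair
`F = ₂F₁ a b c` and `x ^ (1 - c) * G`, `G = ₂F₁ (a - c + 1) (b - c + 1) (2 - c)`, of solutions at
`x = 0` of the hypergeometric equation with `a = n / 2 + s`, `b = 1 + s`, `c = 1 + 2 * s`.
By Abel's identity `(1 - x) ^ (a + b - c + 1) * ((1 - c) * F * G + x * (F * G' - F' * G))` has zero
derivative on the unit disc, so it equals its value `1 - c = -2 * s` at `x = 0`. The weight
`(z * (z - 1)) ^ (n / 2)` collects the elementary prefactors of the two solutions and `dx / dz`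
into `x * (1 - x) ^ (a + b - c + 1)`.
-/

section PowerSeries

open FormalMultilinearSeries

variable {𝕜 : Type*} [NontriviallyNormedField 𝕜] {f : 𝕜 → 𝕜} {q : ℕ → 𝕜} {x : 𝕜} {r : ENNReal}

lemma hasFPowerSeriesOnBall_deriv_ofScalars [CompleteSpace 𝕜]
    (hf : HasFPowerSeriesOnBall f (ofScalars 𝕜 q) x r) :
    HasFPowerSeriesOnBall (deriv f) (ofScalars 𝕜 fun k ↦ ((k : 𝕜) + 1) * q (k + 1)) x r := by
  have hderiv := (ContinuousLinearMap.apply 𝕜 𝕜 (1 : 𝕜)).comp_hasFPowerSeriesOnBall hf.fderiv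
  have hcoeff : (ContinuousLinearMap.apply 𝕜 𝕜 (1 : 𝕜)).compFormalMultilinearSeries
      (ofScalars 𝕜 q).derivSeries = ofScalars 𝕜 fun k ↦ ((k : 𝕜) + 1) * q (k + 1) := by
    ext k
    simp [ofScalars]
  rwa [hcoeff] at hderiv

lemma hasSum_of_hasFPowerSeriesOnBall_ofScalars
    (hf : HasFPowerSeriesOnBall f (ofScalars 𝕜 q) 0 r) (hx : x ∈ Metric.eball 0 r) :
    HasSum (fun k ↦ q k * x ^ k) (f x) := by
  simpa [ofScalars_apply_eq, mul_comm] using hf.hasSum hx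

end PowerSeries

lemma hasSum_natCast_mul_mul_pow {R : Type*} [CommRing R] [TopologicalSpace R]
    [IsTopologicalRing R] {q : ℕ → R} {x S : R}
    (h : HasSum (fun k : ℕ ↦ ((k : R) + 1) * q (k + 1) * x ^ k) S) :
    HasSum (fun k : ℕ ↦ (k : R) * q k * x ^ k) (x * S) := by
  rw [← hasSum_nat_add_iff' 1]
  simpa [pow_succ', mul_left_comm x] using h.mul_left x

lemma ordinaryHypergeometricCoefficient_succ {𝕜 : Type*} [Field 𝕜] [CharZero 𝕜] (a b : 𝕜)
    {c : 𝕜} {k : ℕ} (hc : (k : 𝕜) ≠ -c) :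
    ((k : 𝕜) + 1) * (c + k) * ordinaryHypergeometricCoefficient a b c (k + 1) =
      (a + k) * (b + k) * ordinaryHypergeometricCoefficient a b c k := by
  have hck : c + k ≠ 0 := fun h ↦ hc (eq_neg_of_add_eq_zero_right h)
  have hk : (k : 𝕜) + 1 ≠ 0 := Nat.cast_add_one_ne_zero k
  simp only [ordinaryHypergeometricCoefficient, ascPochhammer_succ_eval, Nat.factorial_succ,
    Nat.cast_mul, Nat.cast_succ, mul_inv]
  field_simp

section HypergeometricEquation

variable {𝕜 : Type*} [RCLike 𝕜] (a b c : 𝕜) {x : 𝕜}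

lemma one_le_ordinaryHypergeometricSeries_radius :
    1 ≤ (ordinaryHypergeometricSeries 𝕜 a b c).radius := by
  by_cases habc : ∀ k : ℕ, (k : 𝕜) ≠ -a ∧ (k : 𝕜) ≠ -b ∧ (k : 𝕜) ≠ -c
  · exact (ordinaryHypergeometricSeries_radius_eq_one 𝕜 a b c habc).ge
  · obtain ⟨k, hk⟩ : ∃ k : ℕ, (k : 𝕜) = -a ∨ (k : 𝕜) = -b ∨ (k : 𝕜) = -c := by
      by_contra! h
      exact habc h
    rcases hk with hk | hk | hk <;> obtain rfl := neg_eq_iff_eq_neg.mp hk.symm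
    · simp [ordinaryHypergeometric_radius_top_of_neg_nat₁]
    · simp [ordinaryHypergeometric_radius_top_of_neg_nat₂]
    · simp [ordinaryHypergeometric_radius_top_of_neg_nat₃]

lemma hasFPowerSeriesOnBall_ordinaryHypergeometric :
    HasFPowerSeriesOnBall (₂F₁ a b c : 𝕜 → 𝕜) (ordinaryHypergeometricSeries 𝕜 a b c) 0 1 :=
  have hr := one_le_ordinaryHypergeometricSeries_radius a b c
  ((ordinaryHypergeometricSeries 𝕜 a b c).hasFPowerSeriesOnBall
    (one_pos.trans_le hr)).mono one_pos hr

lemma analyticAt_ordinaryHypergeometric (hx : ‖x‖ < 1) : AnalyticAt 𝕜 (₂F₁ a b c : 𝕜 → 𝕜) x :=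
  (hasFPowerSeriesOnBall_ordinaryHypergeometric a b c).analyticAt_of_mem
    (by simpa [← ofReal_norm] using hx)

lemma hasDerivAt_ordinaryHypergeometric (hx : ‖x‖ < 1) :
    HasDerivAt (₂F₁ a b c : 𝕜 → 𝕜) (deriv (₂F₁ a b c) x) x :=
  (analyticAt_ordinaryHypergeometric a b c hx).differentiableAt.hasDerivAt

lemma hasDerivAt_deriv_ordinaryHypergeometric (hx : ‖x‖ < 1) :
    HasDerivAt (deriv (₂F₁ a b c : 𝕜 → 𝕜)) (deriv (deriv (₂F₁ a b c)) x) x :=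
  (analyticAt_ordinaryHypergeometric a b c hx).deriv.differentiableAt.hasDerivAt

variable {c}

lemma ordinaryHypergeometric_differential_equation (hc : ∀ k : ℕ, (k : 𝕜) ≠ -c) (hx : ‖x‖ < 1) :
    x * (1 - x) * deriv (deriv (₂F₁ a b c)) x + (c - (a + b + 1) * x) * deriv (₂F₁ a b c) x
      - a * b * ₂F₁ a b c x = 0 := by
  have hF := hasFPowerSeriesOnBall_ordinaryHypergeometric a b c
  have hF' := hasFPowerSeriesOnBall_deriv_ofScalars hF
  have hF'' := hasFPowerSeriesOnBall_deriv_ofScalars hF'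
  have hx_mem : x ∈ Metric.eball 0 1 := by simpa [← ofReal_norm] using hx
  have sum_F := hasSum_of_hasFPowerSeriesOnBall_ofScalars hF hx_mem
  have sum_F' := hasSum_of_hasFPowerSeriesOnBall_ofScalars hF' hx_mem
  have sum_F'' := hasSum_of_hasFPowerSeriesOnBall_ofScalars hF'' hx_mem
  set q := ordinaryHypergeometricCoefficient a b c
  have sum_xF' : HasSum (fun k : ℕ ↦ k * q k * x ^ k) (x * deriv (₂F₁ a b c) x) :=
    hasSum_natCast_mul_mul_pow sum_F'
  have sum_xF'' : HasSum (fun k : ℕ ↦ k * ((k + 1) * q (k + 1)) * x ^ k)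
      (x * deriv (deriv (₂F₁ a b c)) x) :=
    hasSum_natCast_mul_mul_pow (q := fun k ↦ ((k : 𝕜) + 1) * q (k + 1)) sum_F''
  have sum_xxF'' : HasSum (fun k : ℕ ↦ k * ((k - 1) * q k) * x ^ k)
      (x * (x * deriv (deriv (₂F₁ a b c)) x)) :=
    hasSum_natCast_mul_mul_pow (q := fun k ↦ ((k : 𝕜) - 1) * q k)
      (sum_xF''.congr_fun fun k ↦ by push_cast; ring)
  have sum_lhs := (((sum_xF''.sub sum_xxF'').add (sum_F'.mul_left c)).sub
    (sum_xF'.mul_left (a + b + 1))).sub (sum_F.mul_left (a * b))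
  have coeff_eq_zero (k : ℕ) : k * ((k + 1) * q (k + 1)) * x ^ k - k * ((k - 1) * q k) * x ^ k
      + c * ((k + 1) * q (k + 1) * x ^ k) - (a + b + 1) * (k * q k * x ^ k)
      - a * b * (q k * x ^ k) = 0 := by
    linear_combination x ^ k * ordinaryHypergeometricCoefficient_succ a b (hc k)
  simp only [coeff_eq_zero] at sum_lhs
  linear_combination sum_lhs.unique hasSum_zero

end HypergeometricEquation

section KummerPair

/-- The Wronskian of the two solutions `F = ₂F₁ a b c` and `x ^ (1 - c) * G`,
`G = ₂F₁ (a - c + 1) (b - c + 1) (2 - c)`, of the hypergeometric equation at `x = 0`, multiplied by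
`x ^ c * (1 - x) ^ (a + b - c + 1)`, which makes it single-valued on the unit disc. -/
noncomputable def kummerWronskian (a b c x : ℂ) : ℂ :=
  (1 - x) ^ (a + b - c + 1) *
    ((1 - c) * ₂F₁ a b c x * ₂F₁ (a - c + 1) (b - c + 1) (2 - c) x +
      x * (₂F₁ a b c x * deriv (₂F₁ (a - c + 1) (b - c + 1) (2 - c)) x -
        deriv (₂F₁ a b c) x * ₂F₁ (a - c + 1) (b - c + 1) (2 - c) x))

variable (a b : ℂ) {c x : ℂ}

lemma hasDerivAt_kummerWronskian (hc : ∀ k : ℕ, (k : ℂ) ≠ -c) (hc' : ∀ k : ℕ, (k : ℂ) ≠ -(2 - c))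
    (hx : ‖x‖ < 1) : HasDerivAt (kummerWronskian a b c) 0 x := by
  have hre : 0 < (1 - x).re := by
    rw [sub_re, one_re]
    linarith [re_le_norm x]
  have hne : 1 - x ≠ 0 := ne_zero_of_re_pos hre
  have hF := hasDerivAt_ordinaryHypergeometric a b c hx
  have hF' := hasDerivAt_deriv_ordinaryHypergeometric a b c hx
  have hG := hasDerivAt_ordinaryHypergeometric (a - c + 1) (b - c + 1) (2 - c) hx
  have hG' := hasDerivAt_deriv_ordinaryHypergeometric (a - c + 1) (b - c + 1) (2 - c) hx
  have odeF := ordinaryHypergeometric_differential_equation a b hc hx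
  have odeG := ordinaryHypergeometric_differential_equation (a - c + 1) (b - c + 1) hc' hx
  have hpow := ((hasDerivAt_id x).const_sub 1).cpow_const (c := a + b - c + 1) (Or.inl hre)
  have hW := ((hF.const_mul (1 - c)).mul hG).add
    ((hasDerivAt_id x).mul ((hF.mul hG').sub (hF'.mul hG)))
  refine (hpow.mul hW).congr_deriv ?_
  simp only [id, add_sub_cancel_right, Pi.mul_apply, Pi.add_apply, Pi.sub_apply,
    cpow_add _ 1 hne, cpow_one]
  linear_combination (1 - x) ^ (a + b - c) * (₂F₁ a b c x * odeG -
    ₂F₁ (a - c + 1) (b - c + 1) (2 - c) x * odeF)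

theorem kummerWronskian_eq (hc : ∀ k : ℕ, (k : ℂ) ≠ -c) (hc' : ∀ k : ℕ, (k : ℂ) ≠ -(2 - c))
    (hx : ‖x‖ < 1) : kummerWronskian a b c x = 1 - c := by
  have hderiv : ∀ y ∈ Metric.ball (0 : ℂ) 1, HasDerivAt (kummerWronskian a b c) 0 y :=
    fun y hy ↦ hasDerivAt_kummerWronskian a b hc hc' (mem_ball_zero_iff.mp hy)
  calc kummerWronskian a b c x
      = kummerWronskian a b c 0 :=
        Metric.isOpen_ball.is_const_of_deriv_eq_zero (convex_ball (0 : ℂ) 1).isPreconnected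
          (fun y hy ↦ (hderiv y hy).differentiableAt.differentiableWithinAt)
          (fun y hy ↦ (hderiv y hy).deriv) (mem_ball_zero_iff.mpr hx) (Metric.mem_ball_self one_pos)
    _ = 1 - c := by simp [kummerWronskian]

end KummerPair

section SolutionsAtInfinity

/-- The solution of exponent `s + (n - 1) / 2` in `1 / z` at `z = -∞`: the paper's `w₊`, whose
`w₋` is obtained by replacing `s` with `-s`. The power `(-z) ^ (-s - n / 2)` is written as an
exponential, which agrees with `cpow` for `z < 0`. -/
noncomputable def solutionAtInfinity (n s : ℂ) (z : ℝ) : ℂ :=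
  exp ((-s - n / 2) * (Real.log (-z) : ℂ)) * (Real.sqrt (1 - z) : ℂ) *
    ₂F₁ (n / 2 + s) (1 + s) (1 + 2 * s) ((z : ℂ)⁻¹)

variable (n s : ℂ) {z : ℝ}

lemma norm_ofReal_inv_lt_one (hz : z < -1) : ‖(z : ℂ)⁻¹‖ < 1 := by
  rw [norm_inv, norm_real, Real.norm_eq_abs]
  exact inv_lt_one_of_one_lt₀ (lt_abs.mpr (Or.inr (by linarith)))

lemma hasDerivAt_solutionAtInfinity (hz : z < -1) :
    HasDerivAt (solutionAtInfinity n s)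
      (exp ((-s - n / 2) * (Real.log (-z) : ℂ)) * (Real.sqrt (1 - z) : ℂ) *
        (((-s - n / 2) / z - 1 / (2 * (1 - z))) *
            ₂F₁ (n / 2 + s) (1 + s) (1 + 2 * s) ((z : ℂ)⁻¹) -
          deriv (₂F₁ (n / 2 + s) (1 + s) (1 + 2 * s)) ((z : ℂ)⁻¹) / z ^ 2)) z := by
  have hz0 : z ≠ 0 := by linarith
  have hpos : 0 < 1 - z := by linarith
  have hsqrt_ne : (Real.sqrt (1 - z) : ℂ) ≠ 0 := ofReal_ne_zero.mpr (Real.sqrt_pos.mpr hpos).ne'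
  have hsqrt_sq : (Real.sqrt (1 - z) : ℂ) ^ 2 = 1 - z := by exact_mod_cast Real.sq_sqrt hpos.le
  have hlog : HasDerivAt (fun y : ℝ ↦ (Real.log (-y) : ℂ)) ((z : ℂ)⁻¹) z :=
    ((hasDerivAt_neg z).log (neg_ne_zero.mpr hz0)).ofReal_comp.congr_deriv (by simp)
  have hsqrt : HasDerivAt (fun y : ℝ ↦ (Real.sqrt (1 - y) : ℂ))
      (-1 / (2 * (Real.sqrt (1 - z) : ℂ))) z :=
    (((hasDerivAt_id z).const_sub 1).sqrt hpos.ne').ofReal_comp.congr_deriv (by simp)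
  have hinv : HasDerivAt (fun y : ℝ ↦ (y : ℂ)⁻¹) (-((z : ℂ) ^ 2)⁻¹) z :=
    (hasDerivAt_inv (ofReal_ne_zero.mpr hz0)).comp_ofReal
  have hF : HasDerivAt (fun y : ℝ ↦ ₂F₁ (n / 2 + s) (1 + s) (1 + 2 * s) ((y : ℂ)⁻¹)) _ z :=
    (hasDerivAt_ordinaryHypergeometric (n / 2 + s) (1 + s) (1 + 2 * s)
      (norm_ofReal_inv_lt_one hz)).comp z hinv
  refine (((hlog.const_mul (-s - n / 2)).cexp.mul hsqrt).mul hF).congr_deriv ?_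
  simp only [Pi.mul_apply]
  rw [← hsqrt_sq]
  field_simp
  ring

lemma cpow_mul_wronskian_solutionAtInfinity (hz : z < -1) :
    (1 - (z : ℂ)⁻¹) ^ (n / 2 + 1) *
        (deriv (solutionAtInfinity n s) z * solutionAtInfinity n (-s) z -
          solutionAtInfinity n s z * deriv (solutionAtInfinity n (-s)) z) =
      (1 - z) / z * exp (-n * (Real.log (-z) : ℂ)) *
        kummerWronskian (n / 2 + s) (1 + s) (1 + 2 * s) ((z : ℂ)⁻¹) := by
  have hsqrt_sq : (Real.sqrt (1 - z) : ℂ) ^ 2 = 1 - z := by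
    exact_mod_cast Real.sq_sqrt (by linarith : 0 ≤ 1 - z)
  have hexp : exp (-n * (Real.log (-z) : ℂ)) = exp ((-s - n / 2) * (Real.log (-z) : ℂ)) *
      exp ((-(-s) - n / 2) * (Real.log (-z) : ℂ)) := by
    rw [← Complex.exp_add]
    ring_nf
  have ha : n / 2 + s - (1 + 2 * s) + 1 = n / 2 + -s := by ring
  have hb : 1 + s - (1 + 2 * s) + 1 = 1 + -s := by ring
  have hc : 2 - (1 + 2 * s) = 1 + 2 * -s := by ring
  have hν : n / 2 + s + (1 + s) - (1 + 2 * s) + 1 = n / 2 + 1 := by ring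
  rw [(hasDerivAt_solutionAtInfinity n s hz).deriv, (hasDerivAt_solutionAtInfinity n (-s) hz).deriv,
    hexp, ← hsqrt_sq, kummerWronskian, ha, hb, hc, hν]
  simp only [solutionAtInfinity]
  field_simp
  ring

lemma cpow_mul_exp_neg_mul_log (hz : z < 0) :
    ((z * (z - 1) : ℝ) : ℂ) ^ (n / 2) * ((1 - z) / z * exp (-n * (Real.log (-z) : ℂ))) =
      -(1 - (z : ℂ)⁻¹) ^ (n / 2 + 1) := by
  have hneg : 0 < -z := neg_pos.mpr hz
  have hone_sub : 0 < 1 - z⁻¹ := by linarith [inv_lt_zero.mpr hz]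
  have hz0 : (z : ℂ) ≠ 0 := ofReal_ne_zero.mpr hz.ne
  have hone_sub0 : 1 - (z : ℂ)⁻¹ ≠ 0 := by exact_mod_cast hone_sub.ne'
  have hfactor : z * (z - 1) = -z * -z * (1 - z⁻¹) := by field_simp [hz.ne]
  have hexp : ((-z : ℝ) : ℂ) ^ (n / 2) * ((-z : ℝ) : ℂ) ^ (n / 2) *
      exp (-n * (Real.log (-z) : ℂ)) = 1 := by
    rw [cpow_def_of_ne_zero (ofReal_ne_zero.mpr hneg.ne'), ← ofReal_log hneg.le,
      ← Complex.exp_add, ← Complex.exp_add, Complex.exp_eq_one_iff]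
    exact ⟨0, by push_cast; ring⟩
  have hcpow : ((z * (z - 1) : ℝ) : ℂ) ^ (n / 2) = ((-z : ℝ) : ℂ) ^ (n / 2) *
      ((-z : ℝ) : ℂ) ^ (n / 2) * (1 - (z : ℂ)⁻¹) ^ (n / 2) := by
    rw [hfactor, ofReal_mul, mul_cpow_ofReal_nonneg (by positivity) hone_sub.le, ofReal_mul,
      mul_cpow_ofReal_nonneg hneg.le hneg.le]
    push_cast
    rfl
  have hquot : (1 - (z : ℂ)) / z = -(1 - (z : ℂ)⁻¹) := by
    field_simp
    ring
  rw [hcpow, hquot, cpow_add _ _ hone_sub0, cpow_one]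
  linear_combination -(1 - (z : ℂ)⁻¹) ^ (n / 2) * (1 - (z : ℂ)⁻¹) * hexp

variable {s}

lemma natCast_ne_neg_one_add_two_mul (hs : -(1 / 2) < s.re) (k : ℕ) : (k : ℂ) ≠ -(1 + 2 * s) := by
  intro h
  have hre : (k : ℝ) = -(1 + 2 * s.re) := by simpa using congrArg Complex.re h
  linarith [k.cast_nonneg (α := ℝ)]

theorem reduced_wronskian_general (hs : ∀ k : ℕ, (k : ℂ) ≠ -(1 + 2 * s))
    (hs_neg : ∀ k : ℕ, (k : ℂ) ≠ -(1 + 2 * -s)) (hz : z < -1) :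
    ((z * (z - 1) : ℝ) : ℂ) ^ (n / 2) *
      (deriv (solutionAtInfinity n s) z * solutionAtInfinity n (-s) z -
        solutionAtInfinity n s z * deriv (solutionAtInfinity n (-s)) z) = 2 * s := by
  have hne : (1 - (z : ℂ)⁻¹) ^ (n / 2 + 1) ≠ 0 := by
    have : 1 - z⁻¹ ≠ 0 := by linarith [inv_lt_zero.mpr (by linarith : z < 0)]
    exact mt (cpow_eq_zero_iff _ _).mp fun h ↦ this (by exact_mod_cast h.1)
  have hc : 2 - (1 + 2 * s) = 1 + 2 * -s := by ring
  have hkummer : kummerWronskian (n / 2 + s) (1 + s) (1 + 2 * s) ((z : ℂ)⁻¹) = 1 - (1 + 2 * s) :=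
    kummerWronskian_eq _ _ hs (by rwa [hc]) (norm_ofReal_inv_lt_one hz)
  have hwronskian := cpow_mul_wronskian_solutionAtInfinity n s hz
  rw [hkummer] at hwronskian
  apply mul_left_cancel₀ hne
  linear_combination ((z * (z - 1) : ℝ) : ℂ) ^ (n / 2) * hwronskian -
    2 * s * cpow_mul_exp_neg_mul_log n (by linarith : z < 0)

end SolutionsAtInfinity

theorem reduced_wronskian (n : ℕ) (hn : 2 ≤ n) (σ : ℝ) (hσ : 0 < σ)
    (s : ℂ) (hs : s = Complex.I * σ)
    (wp wm : ℝ → ℂ)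
    (hwp : ∀ z : ℝ, wp z = Complex.exp ((-s - (n : ℂ) / 2) * (Real.log (-z) : ℂ)) *
      (Real.sqrt (1 - z) : ℂ) *
      ₂F₁ ((n : ℂ) / 2 + s) (1 + s) (1 + 2 * s) ((z : ℂ)⁻¹))
    (hwm : ∀ z : ℝ, wm z = Complex.exp ((s - (n : ℂ) / 2) * (Real.log (-z) : ℂ)) *
      (Real.sqrt (1 - z) : ℂ) *
      ₂F₁ ((n : ℂ) / 2 - s) (1 - s) (1 - 2 * s) ((z : ℂ)⁻¹)) :
    ∀ z ∈ Iio (-1 : ℝ),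
      (((z * (z - 1)) ^ ((n : ℝ) / 2) : ℝ) : ℂ) *
        (deriv wp z * wm z - wp z * deriv wm z) = 2 * Complex.I * σ := by
  intro z hz
  obtain rfl : wp = solutionAtInfinity n s := funext hwp
  obtain rfl : wm = solutionAtInfinity n (-s) :=
    funext fun y ↦ by simp [hwm, solutionAtInfinity, sub_eq_add_neg]
  have hweight : (((z * (z - 1)) ^ ((n : ℝ) / 2) : ℝ) : ℂ) =
      ((z * (z - 1) : ℝ) : ℂ) ^ ((n : ℂ) / 2) := by
    rw [ofReal_cpow (by nlinarith [mem_Iio.mp hz])]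
    push_cast
    rfl
  rw [hweight, mul_assoc, ← hs]
  have hre : s.re = 0 := by simp [hs]
  exact reduced_wronskian_general n (natCast_ne_neg_one_add_two_mul (by linarith))
    (natCast_ne_neg_one_add_two_mul (by rw [neg_re]; linarith)) hz
end

section
/- Let n ≥ 3 be an integer, k > 0, λ > 0, and set s := √(λ/k); assume s − n/2 is not a nonnegative integer. Define the constant C := (k/4)^{n/2 − 1} · Γ(n/2 + s)·Γ(n/2 − s) / ( (n−2) · ω_{n−1} · Γ(n/2 + 1)·Γ(n/2 − 1) ) and the function g(r) := C · cos(√k·r/2) · ₂F₁(n/2 + s, n/2 − s, n/2 + 1; cos²(√k·r/2)) for r ∈ (0, π/√k). Then lim_{r → 0⁺} r^{n−2} · g(r) = 1 / ( (n−2) · ω_{n−1} ); equivalently, g(r) = 1/((n−2)·ω_{n−1}·r^{n−2}) + o(r^{2−n}) as r → 0⁺. -/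
open Real Set Filter Topology

/-! As `x → 1⁻`, a function `₂F₁ a b c x` with `c < a + b` behaves like a constant multiple of
`(1 - x) ^ (-(a + b - c))`: by Euler's limit formula for `Γ`, the ratio of the `m`-th coefficient of
`₂F₁ a b c` to that of the binomial series of `(1 - x) ^ (-(a + b - c))` tends to
`Γ(c) Γ(a + b - c) / (Γ(a) Γ(b))`, and the quotient of the two series inherits this limit because
the binomial series has positive coefficients and diverges at `1`. Along `x = cos² (κ r)` we have
`1 - x = sin² (κ r) ∼ (κ r)²`, which turns this into a pole of order `2 (a + b - c)` at `r = 0`;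
here `2 (a + b - c) = n - 2` and `κ = √k / 2`, and `C` normalizes the leading coefficient. -/

section PowerSeriesComparison

variable {u : ℕ → ℝ}

lemma isLittleO_tsum_pow_smul {E : Type*} [NormedAddCommGroup E] [NormedSpace ℝ E] {d : ℕ → E}
    (hu : ∀ m, 0 ≤ u m) (hsum : ∀ x ∈ Ioo (0 : ℝ) 1, Summable fun m => u m * x ^ m)
    (htop : Tendsto (fun x : ℝ => ∑' m, u m * x ^ m) (𝓝[<] 1) atTop) (hd : d =o[atTop] u) :
    (fun x : ℝ => ∑' m, x ^ m • d m) =o[𝓝[<] 1] fun x => ∑' m, u m * x ^ m := by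
  rw [Asymptotics.isLittleO_iff] at hd ⊢
  intro ε hε
  obtain ⟨N, hN⟩ := eventually_atTop.1 (hd (half_pos hε))
  let head : ℕ → ℝ := (Iio N).indicator fun m => ‖d m‖
  have summable_head : Summable head :=
    summable_of_hasFiniteSupport ((finite_Iio N).subset support_indicator_subset)
  filter_upwards [Ioo_mem_nhdsLT zero_lt_one, htop.eventually_ge_atTop (2 * (∑' m, head m) / ε)]
    with x hx hlarge
  have hterm (m : ℕ) : ‖x ^ m • d m‖ ≤ ε / 2 * (u m * x ^ m) + head m := by
    have hx0 : 0 ≤ x ^ m := pow_nonneg hx.1.le m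
    rw [norm_smul, norm_of_nonneg hx0]
    obtain hm | hm := lt_or_ge m N
    · have hhead : head m = ‖d m‖ := indicator_of_mem (mem_Iio.2 hm) _
      have hle := mul_le_of_le_one_left (norm_nonneg (d m)) (pow_le_one₀ hx.1.le hx.2.le (n := m))
      have := mul_nonneg (half_pos hε).le (mul_nonneg (hu m) hx0)
      linarith
    · have hhead : head m = 0 := indicator_of_notMem (notMem_Iio.2 hm) _
      have hle := mul_le_mul_of_nonneg_left (hN m hm) hx0
      rw [norm_of_nonneg (hu m)] at hle
      linarith
  have hbound := tsum_of_norm_bounded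
    (((hsum x hx).hasSum.mul_left (ε / 2)).add summable_head.hasSum) hterm
  rw [div_le_iff₀ hε] at hlarge
  calc ‖∑' m, x ^ m • d m‖
      ≤ ε / 2 * (∑' m, u m * x ^ m) + ∑' m, head m := hbound
    _ ≤ ε * ∑' m, u m * x ^ m := by linarith
    _ ≤ ε * ‖∑' m, u m * x ^ m‖ := by gcongr; exact le_norm_self _

theorem tendsto_tsum_mul_pow_div_tsum_mul_pow {v : ℕ → ℝ} {L : ℝ} (hu : ∀ m, 0 < u m)
    (hsum : ∀ x ∈ Ioo (0 : ℝ) 1, Summable fun m => u m * x ^ m)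
    (htop : Tendsto (fun x : ℝ => ∑' m, u m * x ^ m) (𝓝[<] 1) atTop)
    (hL : Tendsto (fun m => v m / u m) atTop (𝓝 L)) :
    Tendsto (fun x : ℝ => (∑' m, v m * x ^ m) / ∑' m, u m * x ^ m) (𝓝[<] 1) (𝓝 L) := by
  have hd : (fun m => v m - L * u m) =o[atTop] u := by
    rw [Asymptotics.isLittleO_iff_tendsto fun m hm => absurd hm (hu m).ne']
    simpa only [sub_div, mul_div_cancel_right₀ _ (hu _).ne', sub_self] using hL.sub_const L
  have hquot :=
    (isLittleO_tsum_pow_smul (fun m => (hu m).le) hsum htop hd).tendsto_div_nhds_zero.add_const L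
  rw [zero_add] at hquot
  refine hquot.congr' ?_
  filter_upwards [Ioo_mem_nhdsLT zero_lt_one, htop.eventually_gt_atTop 0] with x hx hpos
  have hsum_d : Summable fun m => (v m - L * u m) * x ^ m :=
    summable_of_isBigO_nat (hsum x hx) (hd.isBigO.mul (Asymptotics.isBigO_refl _ _))
  have hsplit : ∑' m, v m * x ^ m = ∑' m, x ^ m • (v m - L * u m) + L * ∑' m, u m * x ^ m := by
    simp only [smul_eq_mul, mul_comm (x ^ _)]
    rw [← tsum_mul_left, ← hsum_d.tsum_add ((hsum x hx).mul_left L)]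
    exact tsum_congr fun m => by ring
  rw [hsplit, add_div, mul_div_cancel_right₀ _ hpos.ne']

end PowerSeriesComparison

section Pochhammer

lemma ascPochhammer_eval_eq_prod_range {R : Type*} [CommSemiring R] (n : ℕ) (r : R) :
    (ascPochhammer R n).eval r = ∏ j ∈ Finset.range n, (r + j) := by
  induction n with
  | zero => simp
  | succ n ih => rw [ascPochhammer_succ_eval, ih, Finset.prod_range_succ]

lemma ascPochhammer_eval_ne_zero {R : Type*} [CommRing R] [IsDomain R] {r : R}
    (hr : ∀ m : ℕ, r ≠ -m) (n : ℕ) : (ascPochhammer R n).eval r ≠ 0 := by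
  rw [Ne, ascPochhammer_eval_eq_zero_iff]
  rintro ⟨m, -, hm⟩
  exact hr m (by rw [hm, neg_neg])

lemma ne_neg_natCast_of_pos {R : Type*} [Ring R] [PartialOrder R] [IsOrderedRing R] {t : R}
    (ht : 0 < t) (m : ℕ) : t ≠ -m :=
  ((neg_nonpos.2 m.cast_nonneg).trans_lt ht).ne'

theorem tendsto_ascPochhammer_mul_div_ascPochhammer_mul {a b c d : ℝ} (ha : ∀ m : ℕ, a ≠ -m)
    (hb : ∀ m : ℕ, b ≠ -m) (hc : ∀ m : ℕ, c ≠ -m) (hd : ∀ m : ℕ, d ≠ -m) (h : a + b = c + d) :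
    Tendsto (fun m : ℕ => (ascPochhammer ℝ m).eval a * (ascPochhammer ℝ m).eval b /
      ((ascPochhammer ℝ m).eval c * (ascPochhammer ℝ m).eval d)) atTop
      (𝓝 (Gamma c * Gamma d / (Gamma a * Gamma b))) := by
  rw [← tendsto_add_atTop_iff_nat 1]
  have hlim := ((GammaSeq_tendsto_Gamma c).mul (GammaSeq_tendsto_Gamma d)).div
    ((GammaSeq_tendsto_Gamma a).mul (GammaSeq_tendsto_Gamma b))
    (mul_ne_zero (Gamma_ne_zero ha) (Gamma_ne_zero hb))
  refine hlim.congr' ?_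
  filter_upwards [eventually_gt_atTop 0] with m hm
  have hm_pos : (0 : ℝ) < m := Nat.cast_pos.2 hm
  have hpow : (m : ℝ) ^ a * (m : ℝ) ^ b = (m : ℝ) ^ c * (m : ℝ) ^ d := by
    rw [← rpow_add hm_pos, ← rpow_add hm_pos, h]
  have := ascPochhammer_eval_ne_zero ha (m + 1)
  have := ascPochhammer_eval_ne_zero hb (m + 1)
  have := ascPochhammer_eval_ne_zero hc (m + 1)
  have := ascPochhammer_eval_ne_zero hd (m + 1)
  simp only [Pi.div_apply, GammaSeq, ← ascPochhammer_eval_eq_prod_range]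
  field_simp
  exact hpow.symm

lemma hasSum_ascPochhammer_div_factorial_mul_pow (p : ℝ) {x : ℝ} (hx : |x| < 1) :
    HasSum (fun m : ℕ => (ascPochhammer ℝ m).eval p / m.factorial * x ^ m) ((1 - x) ^ (-p)) := by
  have hcoeff (m : ℕ) :
      Ring.choose (p + m - 1) m = (ascPochhammer ℝ m).eval p / m.factorial := by
    rw [← Ring.multichoose_eq, eq_div_iff (by positivity), mul_comm, ← nsmul_eq_mul,
      Ring.factorial_nsmul_multichoose_eq_ascPochhammer, Polynomial.ascPochhammer_smeval_eq_eval]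
  have hsum := (one_div_one_sub_rpow_hasFPowerSeriesOnBall_zero p).hasSum (y := x)
    (by simpa [Metric.mem_eball, edist_zero_right, ← ofReal_norm] using hx)
  simp only [FormalMultilinearSeries.ofScalars_apply_eq, hcoeff, smul_eq_mul, zero_add,
    one_div] at hsum
  rwa [rpow_neg (by linarith [le_abs_self x])]

end Pochhammer

section Hypergeometric

lemma tendsto_one_sub_nhdsLT_one : Tendsto (fun x : ℝ => 1 - x) (𝓝[<] 1) (𝓝[>] 0) := by
  refine tendsto_nhdsWithin_iff.2 ⟨?_, ?_⟩
  · exact tendsto_nhdsWithin_of_tendsto_nhds (Continuous.tendsto' (by fun_prop) 1 0 (sub_self 1))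
  · exact eventually_mem_nhdsWithin.mono fun x hx => mem_Ioi.2 (sub_pos.2 hx)

variable {a b c : ℝ}

theorem tendsto_one_sub_rpow_mul_ordinaryHypergeometric (ha : ∀ m : ℕ, a ≠ -m)
    (hb : ∀ m : ℕ, b ≠ -m) (hc : ∀ m : ℕ, c ≠ -m) (habc : c < a + b) :
    Tendsto (fun x : ℝ => (1 - x) ^ (a + b - c) * ₂F₁ a b c x) (𝓝[<] 1)
      (𝓝 (Gamma c * Gamma (a + b - c) / (Gamma a * Gamma b))) := by
  set p := a + b - c
  have hp : 0 < p := sub_pos.2 habc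
  let binom (m : ℕ) : ℝ := (ascPochhammer ℝ m).eval p / m.factorial
  have hbinom {x : ℝ} (hx : x ∈ Ioo (0 : ℝ) 1) :
      HasSum (fun m => binom m * x ^ m) ((1 - x) ^ (-p)) :=
    hasSum_ascPochhammer_div_factorial_mul_pow p (abs_lt.2 ⟨by linarith [hx.1], hx.2⟩)
  have binom_pos (m : ℕ) : 0 < binom m := div_pos (ascPochhammer_pos m p hp) (by positivity)
  have hcoeff : Tendsto (fun m => ordinaryHypergeometricCoefficient a b c m / binom m) atTop
      (𝓝 (Gamma c * Gamma p / (Gamma a * Gamma b))) := by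
    refine (tendsto_ascPochhammer_mul_div_ascPochhammer_mul ha hb hc (ne_neg_natCast_of_pos hp)
      (add_sub_cancel _ _).symm).congr fun m => ?_
    simp only [binom]
    field_simp
  have htop : Tendsto (fun x : ℝ => ∑' m, binom m * x ^ m) (𝓝[<] 1) atTop := by
    refine ((tendsto_rpow_neg_nhdsGT_zero (neg_lt_zero.2 hp)).comp
      tendsto_one_sub_nhdsLT_one).congr' ?_
    filter_upwards [Ioo_mem_nhdsLT zero_lt_one] with x hx using (hbinom hx).tsum_eq.symm
  refine (tendsto_tsum_mul_pow_div_tsum_mul_pow binom_pos (fun x hx => (hbinom hx).summable)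
    htop hcoeff).congr' ?_
  filter_upwards [Ioo_mem_nhdsLT zero_lt_one] with x hx
  rw [(hbinom hx).tsum_eq, rpow_neg (sub_pos.2 hx.2).le, div_inv_eq_mul, mul_comm,
    ordinaryHypergeometric_eq_tsum]
  simp only [smul_eq_mul]

lemma one_sub_cos_sq_eq_mul_sinc_sq (y : ℝ) : 1 - cos y ^ 2 = (y * sinc y) ^ 2 := by
  rw [← sin_sq]
  obtain rfl | hy := eq_or_ne y 0
  · simp
  · rw [sinc_of_ne_zero hy, mul_div_cancel₀ _ hy]

lemma tendsto_sinc_const_mul_nhdsGT_zero (κ : ℝ) :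
    Tendsto (fun r => sinc (κ * r)) (𝓝[>] 0) (𝓝 1) :=
  tendsto_nhdsWithin_of_tendsto_nhds
    ((continuous_sinc.comp (continuous_const_mul κ)).tendsto' 0 1 (by simp))

variable {κ : ℝ}

lemma tendsto_cos_const_mul_sq_nhdsGT_zero (hκ : κ ≠ 0) :
    Tendsto (fun r => cos (κ * r) ^ 2) (𝓝[>] 0) (𝓝[<] 1) := by
  refine tendsto_nhdsWithin_iff.2 ⟨?_, ?_⟩
  · exact tendsto_nhdsWithin_of_tendsto_nhds (Continuous.tendsto' (by fun_prop) 0 1 (by simp))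
  · filter_upwards [eventually_mem_nhdsWithin,
      (tendsto_sinc_const_mul_nhdsGT_zero κ).eventually_ne one_ne_zero] with r hr hsinc
    rw [mem_Iio, ← sub_pos, one_sub_cos_sq_eq_mul_sinc_sq]
    have : r ≠ 0 := ne_of_gt hr
    positivity

theorem tendsto_rpow_mul_ordinaryHypergeometric_cos_sq (ha : ∀ m : ℕ, a ≠ -m)
    (hb : ∀ m : ℕ, b ≠ -m) (hc : ∀ m : ℕ, c ≠ -m) (habc : c < a + b) (hκ : 0 < κ) :
    Tendsto (fun r => r ^ (2 * (a + b - c)) * ₂F₁ a b c (cos (κ * r) ^ 2)) (𝓝[>] 0)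
      (𝓝 (Gamma c * Gamma (a + b - c) / (Gamma a * Gamma b) / κ ^ (2 * (a + b - c)))) := by
  have hsinc := tendsto_sinc_const_mul_nhdsGT_zero κ
  have hlim := ((tendsto_one_sub_rpow_mul_ordinaryHypergeometric ha hb hc habc).comp
    (tendsto_cos_const_mul_sq_nhdsGT_zero hκ.ne')).div
    ((hsinc.const_mul κ).rpow_const (p := 2 * (a + b - c)) (by simp [hκ.ne']))
    (by rw [mul_one]; positivity)
  rw [mul_one] at hlim
  refine hlim.congr' ?_
  filter_upwards [eventually_mem_nhdsWithin, hsinc.eventually (lt_mem_nhds one_pos)]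
    with r (hr : 0 < r) hsinc_pos
  have hfactor : (1 - cos (κ * r) ^ 2) ^ (a + b - c) =
      r ^ (2 * (a + b - c)) * (κ * sinc (κ * r)) ^ (2 * (a + b - c)) := by
    rw [one_sub_cos_sq_eq_mul_sinc_sq, ← rpow_two, ← rpow_mul (by positivity),
      ← mul_rpow hr.le (by positivity)]
    ring_nf
  simp only [Pi.div_apply, Function.comp_apply, hfactor]
  field_simp

end Hypergeometric

lemma sqrt_div_two_rpow_two_mul {k : ℝ} (hk : 0 ≤ k) (p : ℝ) :
    (√k / 2) ^ (2 * p) = (k / 4) ^ p := by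
  rw [rpow_mul (by positivity), rpow_two, div_pow, sq_sqrt hk]
  norm_num

theorem green_function_pole_general {d k s : ℝ} (hd : 2 < d) (hk : 0 < k)
    (hadd : ∀ j : ℕ, d / 2 + s ≠ -j) (hsub : ∀ j : ℕ, d / 2 - s ≠ -j) {ω C : ℝ}
    (hω : ω = 2 * π ^ (d / 2) / Gamma (d / 2))
    (hC : C = (k / 4) ^ (d / 2 - 1) * (Gamma (d / 2 + s) * Gamma (d / 2 - s)) /
      ((d - 2) * ω * Gamma (d / 2 + 1) * Gamma (d / 2 - 1)))
    {g : ℝ → ℝ}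
    (hg : ∀ r ∈ Ioo 0 (π / √k), g r = C * cos (√k * r / 2) *
      ₂F₁ (d / 2 + s) (d / 2 - s) (d / 2 + 1) (cos (√k * r / 2) ^ 2)) :
    Tendsto (fun r : ℝ => r ^ (d - 2) * g r) (𝓝[>] 0) (𝓝 (1 / ((d - 2) * ω))) := by
  have hF := tendsto_rpow_mul_ordinaryHypergeometric_cos_sq hadd hsub
    (ne_neg_natCast_of_pos (by linarith : 0 < d / 2 + 1)) (by linarith) (κ := √k / 2)
    (by positivity)
  have hexp : d / 2 + s + (d / 2 - s) - (d / 2 + 1) = d / 2 - 1 := by ring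
  have hcos : Tendsto (fun r : ℝ => cos (√k * r / 2)) (𝓝[>] 0) (𝓝 1) :=
    tendsto_nhdsWithin_of_tendsto_nhds (Continuous.tendsto' (by fun_prop) 0 1 (by simp))
  have hlim := (hcos.const_mul C).mul hF
  have hvalue : C * 1 * (Gamma (d / 2 + 1) * Gamma (d / 2 - 1) /
      (Gamma (d / 2 + s) * Gamma (d / 2 - s)) / (√k / 2) ^ (2 * (d / 2 - 1))) =
      1 / ((d - 2) * ω) := by
    have hω_pos : 0 < ω := by
      have := Gamma_pos_of_pos (by linarith : 0 < d / 2)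
      rw [hω]
      positivity
    have := mul_ne_zero (Gamma_ne_zero hadd) (Gamma_ne_zero hsub)
    have := Gamma_pos_of_pos (by linarith : 0 < d / 2 + 1)
    have := Gamma_pos_of_pos (by linarith : 0 < d / 2 - 1)
    have := sub_pos.2 hd
    rw [sqrt_div_two_rpow_two_mul hk.le, hC]
    generalize Gamma (d / 2 + s) * Gamma (d / 2 - s) = Γab at *
    field_simp
  rw [hexp, hvalue] at hlim
  refine hlim.congr' ?_
  filter_upwards [Ioo_mem_nhdsGT (by positivity : 0 < π / √k)] with r hr
  rw [hg r hr, show 2 * (d / 2 - 1) = d - 2 by ring, div_mul_eq_mul_div]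
  ring

theorem green_function_pole (n : ℕ) (hn : 3 ≤ n) (k lam : ℝ) (hk : 0 < k) (hlam : 0 < lam)
    (s : ℝ) (hs : s = Real.sqrt (lam / k))
    (hquant : ∀ j : ℕ, s - (n : ℝ) / 2 ≠ j)
    (ω C : ℝ)
    (hω : ω = 2 * π ^ ((n : ℝ) / 2) / Real.Gamma ((n : ℝ) / 2))
    (hC : C = (k / 4) ^ ((n : ℝ) / 2 - 1) *
      (Real.Gamma ((n : ℝ) / 2 + s) * Real.Gamma ((n : ℝ) / 2 - s)) /
      (((n : ℝ) - 2) * ω * Real.Gamma ((n : ℝ) / 2 + 1) * Real.Gamma ((n : ℝ) / 2 - 1)))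
    (g : ℝ → ℝ)
    (hg : ∀ r ∈ Ioo 0 (π / Real.sqrt k),
      g r = C * Real.cos (Real.sqrt k * r / 2) *
        ₂F₁ ((n : ℝ) / 2 + s) ((n : ℝ) / 2 - s) ((n : ℝ) / 2 + 1)
          (Real.cos (Real.sqrt k * r / 2) ^ 2)) :
    Tendsto (fun r : ℝ => r ^ (n - 2) * g r) (𝓝[>] (0 : ℝ))
      (𝓝 (1 / (((n : ℝ) - 2) * ω))) := by
  have hadd := ne_neg_natCast_of_pos (show 0 < (n : ℝ) / 2 + s by rw [hs]; positivity)
  simpa only [← rpow_natCast, Nat.cast_sub (show 2 ≤ n by lia), Nat.cast_ofNat] using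
    green_function_pole_general (by exact_mod_cast hn) hk hadd (by grind) hω hC hg
end
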